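/- Let k be odd with k ∣ n. Then there exists a bichromatic travelling salesman tour of the 2n chunked equidistant points on the circle whose total length is exactly n·k + 2n + n/k (that is, n(k + 2 + 1/k)). -/

import Mathlib

/-- The cyclic successor of an index. -/
def nextIdx {m : ℕ} (i : Fin m) : Fin m := ⟨(i.val + 1) % m, Nat.mod_lt _ i.pos⟩

/-- Point `i` of the chunked configuration is red iff `⌊i/k⌋` is even
(the points form alternately colored chunks of `k` consecutive points). -/
def redPt (k : ℕ) {m : ℕ} (i : Fin m) : Bool := decide ((i.val / k) % 2 = 0)

/-- The length of the edge between points `i` and `j` of the `2n` equidistant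
points on the circle: one more than the hop distance along the circle. -/
def edgeLen (n : ℕ) (i j : Fin (2 * n)) : ℕ :=
  min (((j : ℕ) + 2 * n - (i : ℕ)) % (2 * n)) (((i : ℕ) + 2 * n - (j : ℕ)) % (2 * n)) + 1

/-- `v` is a bichromatic travelling salesman tour: a cyclic enumeration of all
`2n` points in which cyclically consecutive points have different colors. -/
def IsBichromaticTour (n k : ℕ) (v : Fin (2 * n) → Fin (2 * n)) : Prop :=
  Function.Bijective v ∧ ∀ i : Fin (2 * n), redPt k (v i) ≠ redPt k (v (nextIdx i))

/-- The total length of a tour. -/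
def tourLength (n : ℕ) (v : Fin (2 * n) → Fin (2 * n)) : ℕ :=
  ∑ i : Fin (2 * n), edgeLen n (v i) (v (nextIdx i))

/-!
For `k = 2h + 1`, zigzag around the circle by steps alternating between `h + 1` forward and `h`
backward, except that two forward steps meet whenever the walk has advanced by a full chunk.
The chunk index then changes by exactly one at every step, so colors alternate. Modulo `k` each step
is `h + 1`, the inverse of `2`, and the walk commutes with translation by `k`, so it hits every
point of the circle once.

If a step has displacement `δ ∈ {h + 1, -h}`, its edge length `L` satisfies
`k * L + 1 = δ + 2 * (h + 1) ^ 2`. The tour winds once around the circle, so the displacements of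
its `2n` edges sum to `2n`, and the total length is `n * (k + 1) ^ 2 / k = n * (k + 2 + 1 / k)`.
-/

/-- The positions of a walk along the half-line `ℕ`, cut into chunks of odd size `2h + 1`: it visits
`h, 2h + 1, h + 1, 2h + 2, …, 3h, 2h` and then repeats this pattern shifted by `2h + 1`. The tour is
its reduction modulo the number of points. -/
def zigzag (h t : ℕ) : ℕ :=
  (2 * h + 1) * (t / (2 * h + 1)) +
    if t % (2 * h + 1) % 2 = 0 then h + t % (2 * h + 1) / 2
    else 2 * h + 1 + t % (2 * h + 1) / 2

lemma two_mul_zigzag (h t : ℕ) :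
    2 * zigzag h t = t + 2 * h + (2 * h + 1) * (t / (2 * h + 1) + t % (2 * h + 1) % 2) := by
  have div_add_mod := Nat.div_add_mod t (2 * h + 1)
  unfold zigzag
  rw [mul_add]
  split_ifs with even
  · rw [even]
    lia
  · rw [Nat.mod_two_ne_zero.mp even]
    lia

lemma zigzag_div (h t : ℕ) :
    zigzag h t / (2 * h + 1) = t / (2 * h + 1) + t % (2 * h + 1) % 2 := by
  have mod_lt := Nat.mod_lt t (Nat.succ_pos (2 * h))
  unfold zigzag
  rw [Nat.mul_add_div (Nat.succ_pos _)]
  congr 1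
  split_ifs with even
  · rw [even, Nat.div_eq_of_lt (by lia)]
  · rw [Nat.mod_two_ne_zero.mp even, Nat.add_div_left _ (Nat.succ_pos _),
      Nat.div_eq_of_lt (by lia)]

lemma zigzag_div_mod_two (h t : ℕ) : zigzag h t / (2 * h + 1) % 2 = t % 2 := by
  have t_eq : 2 * (h * (t / (2 * h + 1))) + t / (2 * h + 1) + t % (2 * h + 1) = t := by
    rw [← mul_assoc, ← add_one_mul, Nat.div_add_mod]
  rw [zigzag_div]
  lia

lemma zigzag_div_succ (h t : ℕ) :
    zigzag h (t + 1) / (2 * h + 1) = zigzag h t / (2 * h + 1) + 1 ∨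
      zigzag h t / (2 * h + 1) = zigzag h (t + 1) / (2 * h + 1) + 1 := by
  have div_add_mod := Nat.div_add_mod t (2 * h + 1)
  have mod_lt := Nat.mod_lt t (Nat.succ_pos (2 * h))
  simp only [zigzag_div]
  rcases Nat.lt_or_eq_of_le (Nat.succ_le_of_lt mod_lt) with inside | last
  · obtain ⟨div_eq, mod_eq⟩ : (t + 1) / (2 * h + 1) = t / (2 * h + 1) ∧
        (t + 1) % (2 * h + 1) = t % (2 * h + 1) + 1 :=
      (Nat.div_mod_unique (Nat.succ_pos _)).mpr ⟨by lia, inside⟩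
    rw [div_eq, mod_eq]
    lia
  · obtain ⟨div_eq, mod_eq⟩ : (t + 1) / (2 * h + 1) = t / (2 * h + 1) + 1 ∧
        (t + 1) % (2 * h + 1) = 0 :=
      (Nat.div_mod_unique (Nat.succ_pos _)).mpr ⟨by lia, Nat.succ_pos _⟩
    rw [div_eq, mod_eq]
    lia

lemma zigzag_succ (h t : ℕ) :
    zigzag h (t + 1) = zigzag h t + (h + 1) ∨ zigzag h t = zigzag h (t + 1) + h := by
  have double := two_mul_zigzag h t
  have double_succ := two_mul_zigzag h (t + 1)
  rw [← zigzag_div] at double double_succ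
  rcases zigzag_div_succ h t with up | down
  · rw [up, mul_add_one] at double_succ
    lia
  · rw [down, mul_add_one] at double
    lia

lemma zigzag_add_eq_add_zigzag {h t u : ℕ} (htu : t ≡ u [MOD 2 * h + 1]) :
    zigzag h t + u = t + zigzag h u := by
  have div_add_mod_t := Nat.div_add_mod t (2 * h + 1)
  have div_add_mod_u := Nat.div_add_mod u (2 * h + 1)
  unfold zigzag
  rw [htu] at div_add_mod_t ⊢
  lia

lemma modEq_of_zigzag_modEq {h t u : ℕ} (hz : zigzag h t ≡ zigzag h u [MOD 2 * h + 1]) :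
    t ≡ u [MOD 2 * h + 1] := by
  have double := hz.mul_left 2
  rw [two_mul_zigzag, two_mul_zigzag, Nat.add_modulus_mul_modEq_iff,
    Nat.modEq_add_modulus_mul_iff] at double
  exact double.add_right_cancel' _

lemma zigzag_modEq_zigzag_iff {h t u N : ℕ} (hN : 2 * h + 1 ∣ N) :
    zigzag h t ≡ zigzag h u [MOD N] ↔ t ≡ u [MOD N] := by
  refine ⟨fun hz => ?_, fun htu => ?_⟩
  · have shift := zigzag_add_eq_add_zigzag (modEq_of_zigzag_modEq (hz.of_dvd hN))
    exact (Nat.ModEq.add_left_cancel hz (by rw [shift, add_comm])).symm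
  · have shift := zigzag_add_eq_add_zigzag (htu.of_dvd hN)
    exact Nat.ModEq.add_left_cancel htu.symm (by rw [add_comm, shift])

lemma sum_zigzag_succ {h N : ℕ} (hN : 2 * h + 1 ∣ N) :
    ∑ t ∈ Finset.range N, zigzag h (t + 1) = ∑ t ∈ Finset.range N, zigzag h t + N := by
  have wind : zigzag h 0 + N = 0 + zigzag h N :=
    zigzag_add_eq_add_zigzag (Nat.modEq_zero_iff_dvd.mpr hN).symm
  have telescope :=
    (Finset.sum_range_succ' (zigzag h) N).symm.trans (Finset.sum_range_succ (zigzag h) N)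
  lia

lemma redPt_ofNat {n k : ℕ} [NeZero n] (hdvd : k ∣ n) (a : ℕ) :
    redPt k (Fin.ofNat (2 * n) a) = decide (a / k % 2 = 0) := by
  obtain ⟨m, rfl⟩ := hdvd
  simp only [redPt, Fin.val_ofNat, mul_left_comm 2 k m, Nat.mod_mul_right_div_self,
    Nat.mod_mul_right_mod]

lemma edgeLen_comm {n : ℕ} (i j : Fin (2 * n)) : edgeLen n i j = edgeLen n j i := by
  rw [edgeLen, edgeLen, min_comm]

lemma edgeLen_eq_of_modEq {n d : ℕ} {i j : Fin (2 * n)} (hd : d ≤ n)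
    (hij : (j : ℕ) ≡ i + d [MOD 2 * n]) : edgeLen n i j = d + 1 := by
  have forward : (j + 2 * n - i : ℕ) ≡ d [MOD 2 * n] := by
    refine Nat.ModEq.add_left_cancel' i ?_
    rw [Nat.add_sub_cancel' (by lia)]
    exact Nat.add_modEq_right.trans hij
  have backward : (i + 2 * n - j : ℕ) ≡ 2 * n - d [MOD 2 * n] := by
    refine Nat.ModEq.add_left_cancel hij ?_
    rw [Nat.add_sub_cancel' (by lia), add_assoc, Nat.add_sub_cancel' (by lia)]
  rw [edgeLen, forward, backward, Nat.mod_eq_of_lt (by lia)]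
  rcases Nat.eq_zero_or_pos d with rfl | d_pos
  · rw [Nat.zero_min]
  · rw [Nat.mod_eq_of_lt (by lia), min_eq_left (by lia)]

lemma edgeLen_ofNat_add {n d : ℕ} [NeZero n] (hd : d ≤ n) (a : ℕ) :
    edgeLen n (Fin.ofNat (2 * n) a) (Fin.ofNat (2 * n) (a + d)) = d + 1 :=
  edgeLen_eq_of_modEq hd <| (Nat.mod_modEq _ _).trans ((Nat.mod_modEq a _).symm.add_right d)

/-- The closed tour induced on the `2n` points of the circle by reducing the walk `zigzag h`
modulo `2n`. -/
def zigzagTour (h n : ℕ) [NeZero n] (i : Fin (2 * n)) : Fin (2 * n) :=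
  Fin.ofNat (2 * n) (zigzag h i)

section Tour

variable {h n : ℕ} [NeZero n]

lemma zigzagTour_nextIdx (hdvd : 2 * h + 1 ∣ n) (i : Fin (2 * n)) :
    zigzagTour h n (nextIdx i) = Fin.ofNat (2 * n) (zigzag h (i + 1)) :=
  Fin.ext <| (zigzag_modEq_zigzag_iff (hdvd.mul_left 2)).mpr (Nat.mod_modEq _ _)

lemma bijective_zigzagTour (hdvd : 2 * h + 1 ∣ n) : Function.Bijective (zigzagTour h n) := by
  refine Function.Injective.bijective_of_finite fun i j hij => Fin.ext ?_
  have modEq := (zigzag_modEq_zigzag_iff (hdvd.mul_left 2)).mp (Fin.val_eq_of_eq hij)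
  exact modEq.eq_of_lt_of_lt i.isLt j.isLt

lemma isBichromaticTour_zigzagTour (hdvd : 2 * h + 1 ∣ n) :
    IsBichromaticTour n (2 * h + 1) (zigzagTour h n) := by
  refine ⟨bijective_zigzagTour hdvd, fun i => ?_⟩
  rw [zigzagTour_nextIdx hdvd, zigzagTour, redPt_ofNat hdvd, redPt_ofNat hdvd,
    zigzag_div_mod_two, zigzag_div_mod_two, ne_eq, decide_eq_decide]
  lia

lemma mul_edgeLen_zigzagTour (hdvd : 2 * h + 1 ∣ n) (i : Fin (2 * n)) :
    (2 * h + 1) * edgeLen n (zigzagTour h n i) (zigzagTour h n (nextIdx i)) + zigzag h i + 1 =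
      zigzag h (i + 1) + 2 * (h + 1) ^ 2 := by
  have chunk_le : 2 * h + 1 ≤ n := Nat.le_of_dvd (NeZero.pos n) hdvd
  rw [zigzagTour_nextIdx hdvd, zigzagTour]
  rcases zigzag_succ h i with forward | backward
  · rw [forward, edgeLen_ofNat_add (by lia)]
    ring
  · rw [backward, edgeLen_comm, edgeLen_ofNat_add (by lia)]
    ring

lemma mul_tourLength_zigzagTour (hdvd : 2 * h + 1 ∣ n) :
    (2 * h + 1) * tourLength n (zigzagTour h n) = n * (2 * h + 2) ^ 2 := by
  have wind := sum_zigzag_succ (hdvd.mul_left 2)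
  have edges := Finset.sum_congr rfl fun i (_ : i ∈ Finset.univ) => mul_edgeLen_zigzagTour hdvd i
  simp only [Finset.sum_add_distrib, ← Finset.mul_sum, Finset.sum_const, Finset.card_univ,
    Fintype.card_fin, smul_eq_mul, Fin.sum_univ_eq_sum_range (zigzag h),
    Fin.sum_univ_eq_sum_range (fun t => zigzag h (t + 1)), wind] at edges
  rw [← tourLength] at edges
  lia

end Tour

/-- For odd chunk size `k` dividing `n`, there is a bichromatic travelling
salesman tour of the `2n` chunked equidistant points on the circle of total
length exactly `n·k + 2n + n/k`. -/
theorem tsp_chunked_circle_odd_upper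
    (n k : ℕ) (hn : 1 ≤ n) (hk : 1 ≤ k) (hdvd : k ∣ n) (hko : Odd k) :
    ∃ v : Fin (2 * n) → Fin (2 * n), IsBichromaticTour n k v ∧
      tourLength n v = n * k + 2 * n + n / k := by
  obtain ⟨h, rfl⟩ := hko
  have : NeZero n := ⟨Nat.ne_of_gt hn⟩
  refine ⟨zigzagTour h n, isBichromaticTour_zigzagTour hdvd, Nat.eq_of_mul_eq_mul_left hk ?_⟩
  calc (2 * h + 1) * tourLength n (zigzagTour h n)
      = n * (2 * h + 2) ^ 2 := mul_tourLength_zigzagTour hdvd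
    _ = (2 * h + 1) * (n * (2 * h + 1) + 2 * n) + n := by ring
    _ = (2 * h + 1) * (n * (2 * h + 1) + 2 * n + n / (2 * h + 1)) := by
      rw [mul_add _ _ (n / _), Nat.mul_div_cancel' hdvd]
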